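/- arXiv:1806.06429 — 2 statements merged into one kernel-verified Lean document; each statement's English description precedes it below -/
import Mathlib

section
/- There exists an absolute constant C > 0 such that for all positive integers n, d, k, every α > 0, and every linear map L : ℝ^{d×n} → ℝ^k, the total variation distance between the pushforward L#G₁ and the pushforward L#G₂[α] is at most C·α²·k/n. -/
open MeasureTheory ENNReal

/-- The ℓ_p norm of a vector in ℝ^n, for p ∈ [1,∞] (p : ℝ≥0∞),
with `lpNorm ∞ x = max_i |x i|`. -/
noncomputable def lpNorm (p : ℝ≥0∞) {n : ℕ} (x : Fin n → ℝ) : ℝ :=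
  if p = ∞ then ⨆ i, |x i| else (∑ i, |x i| ^ p.toReal) ^ (1 / p.toReal)

/-- The q→p operator norm of a real m×n matrix:
`opNorm q p A = sup_{x} ‖Ax‖_p / ‖x‖_q` (with the convention 0/0 = 0 at x = 0). -/
noncomputable def opNorm (q p : ℝ≥0∞) {m n : ℕ} (A : Matrix (Fin m) (Fin n) ℝ) : ℝ :=
  ⨆ x : Fin n → ℝ, lpNorm p (A.mulVec x) / lpNorm q x

instance matrixMeasurableSpace {m n : Type*} : MeasurableSpace (Matrix m n ℝ) :=
  MeasurableSpace.pi

/-- A linear map ℝ^{m×n} → ℝ^k, encoded by a k × (m·n) matrix, applied to a matrix A. -/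
def sketchApply {k m n : ℕ} (L : Matrix (Fin k) (Fin m × Fin n) ℝ)
    (A : Matrix (Fin m) (Fin n) ℝ) : Fin k → ℝ :=
  L.mulVec fun ij => A ij.1 ij.2

/-- `(S, f)` is a (k, α)-sketching family for the q→p norm of m×n matrices:
S (here μ) is a probability distribution over linear maps L : ℝ^{m×n} → ℝ^k and
f : ℝ^k → ℝ is measurable, such that for every m×n matrix A,
Pr_{L∼μ}[f(L(A)) ∈ (‖A‖_{q→p}/α, α‖A‖_{q→p})] ≥ 5/6. -/
def IsSketchingFamily (q p : ℝ≥0∞) (m n k : ℕ) (α : ℝ)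
    (μ : Measure (Matrix (Fin k) (Fin m × Fin n) ℝ)) (f : (Fin k → ℝ) → ℝ) : Prop :=
  IsProbabilityMeasure μ ∧ Measurable f ∧
  ∀ A : Matrix (Fin m) (Fin n) ℝ,
    (5/6 : ℝ≥0∞) ≤ μ {L | f (sketchApply L A) ∈
      Set.Ioo (opNorm q p A / α) (α * opNorm q p A)}

/-- Total variation distance between two measures: sup over measurable sets E of |μ(E) − ν(E)|. -/
noncomputable def tvDist {Ω : Type*} [MeasurableSpace Ω] (μ ν : Measure Ω) : ℝ :=
  ⨆ s : {s : Set Ω // MeasurableSet s}, |(μ s.1).toReal - (ν s.1).toReal|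

/-- The uniform distribution on Fin n. -/
noncomputable def uniformFin (n : ℕ) : Measure (Fin n) :=
  ((n : ℝ≥0∞))⁻¹ • ∑ i : Fin n, Measure.dirac i

/-- G₁: the distribution of an m×n random matrix with i.i.d. standard Gaussian entries. -/
noncomputable def gaussianMatrix (m n : ℕ) : Measure (Matrix (Fin m) (Fin n) ℝ) :=
  Measure.pi fun _ : Fin m => Measure.pi fun _ : Fin n => ProbabilityTheory.gaussianReal 0 1

/-- The distribution of a standard Gaussian vector in ℝ^m. -/
noncomputable def gaussianVec (m : ℕ) : Measure (Fin m → ℝ) :=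
  Measure.pi fun _ : Fin m => ProbabilityTheory.gaussianReal 0 1

/-- G₂[α]: the distribution of G + α·u·e_iᵀ where G is an i.i.d. standard Gaussian m×n
matrix, u ∈ ℝ^m an independent standard Gaussian vector, and the column index i is
uniform on Fin n, independent of (G, u). -/
noncomputable def spikedGaussian (m n : ℕ) (α : ℝ) : Measure (Matrix (Fin m) (Fin n) ℝ) :=
  Measure.map (fun x : Matrix (Fin m) (Fin n) ℝ × ((Fin m → ℝ) × Fin n) =>
      x.1 + Matrix.of fun a b => if b = x.2.2 then α * x.2.1 a else 0)
    ((gaussianMatrix m n).prod ((gaussianVec m).prod (uniformFin n)))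

open ProbabilityTheory
open Complex (I)
open scoped RealInnerProductSpace

/-!
Adding an independent centred random vector `w` to a standard Gaussian vector multiplies its density
at `x` by `𝔼 exp (⟪x, w⟫ - ‖w‖² / 2)` (Cameron–Martin). Since `exp y ≥ 1 + y` and `𝔼 w = 0`, this
factor is at least `1 - δ` with `δ = 𝔼 ‖w‖² / 2`, and a probability measure dominating `1 - δ` times
another one is within `δ` of it in total variation. A linear map `T` does not see the component of
`w` in `ker T`, so after applying `T` only the projection of `w` onto `(ker T)ᗮ` counts. Finally,
because its column is uniform, the spike `w = α u e_iᵀ` is isotropic, `𝔼 ⟪x, w⟫² = (α² / n) ‖x‖²`,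
so this projection has second moment `(α² / n) rank T ≤ α² k / n`.
-/

theorem ofReal_integral_le_lintegral_ofReal {Ω : Type*} [MeasurableSpace Ω] {μ : Measure Ω}
    {f : Ω → ℝ} (hf : Integrable f μ) :
    ENNReal.ofReal (∫ ω, f ω ∂μ) ≤ ∫⁻ ω, .ofReal (f ω) ∂μ := by
  refine ENNReal.ofReal_le_of_le_toReal ?_
  rw [integral_eq_lintegral_pos_part_sub_lintegral_neg_part hf]
  exact sub_le_self _ ENNReal.toReal_nonneg

section TotalVariation

variable {Ω Ω' : Type*} [MeasurableSpace Ω] [MeasurableSpace Ω'] {μ ν : Measure Ω}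

theorem tvDist_le_of_forall_sub_le [IsProbabilityMeasure μ] [IsProbabilityMeasure ν] {δ : ℝ}
    (h : ∀ s, MeasurableSet s → μ.real s - ν.real s ≤ δ) : tvDist μ ν ≤ δ := by
  have : Nonempty {s : Set Ω // MeasurableSet s} := ⟨⟨∅, .empty⟩⟩
  refine ciSup_le fun s => abs_sub_le_iff.2 ⟨h s.1 s.2, ?_⟩
  have hcompl := h s.1ᶜ s.2.compl
  rw [probReal_compl_eq_one_sub s.2, probReal_compl_eq_one_sub s.2] at hcompl
  change ν.real s.1 - μ.real s.1 ≤ δ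
  linarith

theorem tvDist_le_of_smul_le [IsProbabilityMeasure μ] [IsProbabilityMeasure ν] {δ : ℝ}
    (h : ENNReal.ofReal (1 - δ) • μ ≤ ν) : tvDist μ ν ≤ δ := by
  have hreal (s : Set Ω) : (1 - δ) * μ.real s ≤ ν.real s := by
    have hs := ENNReal.toReal_mono (measure_ne_top ν s) (h s)
    rw [Measure.smul_apply, smul_eq_mul, ENNReal.toReal_mul, ENNReal.toReal_ofReal'] at hs
    exact (mul_le_mul_of_nonneg_right (le_max_left _ _) measureReal_nonneg).trans hs
  have hδ : 0 ≤ δ := by simpa using hreal Set.univ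
  refine tvDist_le_of_forall_sub_le fun s _ => ?_
  linarith [hreal s, mul_le_of_le_one_right hδ (measureReal_le_one (μ := μ) (s := s))]

theorem tvDist_map_le [IsFiniteMeasure μ] [IsFiniteMeasure ν] {f : Ω → Ω'} (hf : Measurable f) :
    tvDist (μ.map f) (ν.map f) ≤ tvDist μ ν := by
  have : Nonempty {s : Set Ω' // MeasurableSet s} := ⟨⟨∅, .empty⟩⟩
  have hbdd : BddAbove (Set.range fun s : {s : Set Ω // MeasurableSet s} =>
      |μ.real s.1 - ν.real s.1|) := by
    refine ⟨max (μ.real .univ) (ν.real .univ), ?_⟩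
    rintro _ ⟨s, rfl⟩
    exact abs_sub_le_iff.2
      ⟨(sub_le_self _ measureReal_nonneg).trans
        ((measureReal_mono s.1.subset_univ).trans (le_max_left _ _)),
      (sub_le_self _ measureReal_nonneg).trans
        ((measureReal_mono s.1.subset_univ).trans (le_max_right _ _))⟩
  refine ciSup_le fun s => ?_
  rw [Measure.map_apply hf s.2, Measure.map_apply hf s.2]
  exact le_ciSup hbdd ⟨f ⁻¹' s.1, hf s.2⟩

end TotalVariation

section Convolution

variable {M Ω Ω' : Type*} [AddMonoid M] [MeasurableSpace M] [MeasurableAdd₂ M]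
  [MeasurableSpace Ω] [MeasurableSpace Ω']

theorem map_conv_map {ν : Measure Ω} {μ : Measure Ω'} [SFinite ν] [SFinite μ] {f : Ω → M}
    {g : Ω' → M} (hf : Measurable f) (hg : Measurable g) :
    ν.map f ∗ μ.map g = (ν.prod μ).map fun p => f p.1 + g p.2 := by
  rw [Measure.conv, Measure.map_prod_map _ _ hf hg, Measure.map_map (by fun_prop) (by fun_prop)]
  rfl

theorem map_conv_map_eq_map_conv {N Φ : Type*} [Add N] [MeasurableSpace N] [FunLike Φ M N]
    [AddHomClass Φ M N] {ν μ : Measure M} [SFinite ν] [SFinite μ] (T : Φ) {P : M → M}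
    (hT : Measurable T) (hP : Measurable P) (hTP : ∀ w, T (P w) = T w) :
    (ν ∗ μ.map P).map T = (ν ∗ μ).map T := by
  have hconv : ν ∗ μ.map P = (ν.prod μ).map fun p => p.1 + P p.2 := by
    simpa using map_conv_map (ν := ν) (μ := μ) measurable_id hP
  rw [hconv, Measure.conv, Measure.map_map hT (by fun_prop), Measure.map_map hT (by fun_prop)]
  simp [Function.comp_def, hTP]

end Convolution

section StdGaussian

variable {E : Type*} [NormedAddCommGroup E] [InnerProductSpace ℝ E] [FiniteDimensional ℝ E]
  [MeasurableSpace E] [BorelSpace E]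

theorem integral_inner_stdGaussian (v : E) : ∫ x, ⟪v, x⟫ ∂stdGaussian E = 0 :=
  integral_strongDual_stdGaussian (innerSL ℝ v)

theorem integral_inner_sq_stdGaussian (v : E) : ∫ x, ⟪v, x⟫ ^ 2 ∂stdGaussian E = ‖v‖ ^ 2 := by
  have hvar := variance_dual_stdGaussian (innerSL ℝ v)
  rw [variance_of_integral_eq_zero (by fun_prop) (integral_strongDual_stdGaussian _),
    innerSL_apply_norm] at hvar
  exact hvar

theorem integral_cexp_inner_add_inner_mul_I_stdGaussian (v t : E) :
    ∫ x, Complex.exp (⟪x, v⟫ + ⟪x, t⟫ * I) ∂stdGaussian E =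
      Complex.exp ((‖v‖ ^ 2 - ‖t‖ ^ 2) / 2 + ⟪v, t⟫ * I) := by
  let b := stdOrthonormalBasis ℝ E
  let z i : ℂ := ⟪b i, v⟫ + ⟪b i, t⟫ * I
  have hprod (x : Fin (Module.finrank ℝ E) → ℝ) :
      Complex.exp (⟪∑ i, x i • b i, v⟫ + ⟪∑ i, x i • b i, t⟫ * I) =
        ∏ i, Complex.exp (z i * x i) := by
    simp only [sum_inner, real_inner_smul_left, ← Complex.exp_sum, z]
    push_cast
    rw [Finset.sum_mul, ← Finset.sum_add_distrib]
    congr! 2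
    ring
  have hfactor i : ∫ x : ℝ, Complex.exp (z i * x) ∂gaussianReal 0 1 =
      Complex.exp (z i ^ 2 / 2) := by
    simpa [complexMGF] using complexMGF_id_gaussianReal (μ := 0) (v := 1) (z i)
  have hsq : ∑ i, z i ^ 2 / 2 = (‖v‖ ^ 2 - ‖t‖ ^ 2) / 2 + ⟪v, t⟫ * I := by
    rw [← b.sum_inner_mul_inner v t, ← Complex.ofReal_pow, ← Complex.ofReal_pow,
      ← b.sum_sq_inner_right v, ← b.sum_sq_inner_right t]
    push_cast
    rw [← Finset.sum_sub_distrib, Finset.sum_div, Finset.sum_mul, ← Finset.sum_add_distrib]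
    refine Finset.sum_congr rfl fun i _ => ?_
    simp only [z, real_inner_comm (b i) v]
    linear_combination (⟪b i, t⟫ : ℂ) ^ 2 / 2 * Complex.I_sq
  rw [stdGaussian_eq_map_pi_orthonormalBasis b,
    integral_map (Measurable.aemeasurable (by fun_prop)) (by fun_prop)]
  simp_rw [hprod]
  rw [integral_fintype_prod_eq_prod (f := fun i (x : ℝ) => Complex.exp (z i * x))]
  simp_rw [hfactor, ← Complex.exp_sum, hsq]

theorem integral_exp_inner_stdGaussian (v : E) :
    ∫ x, Real.exp ⟪x, v⟫ ∂stdGaussian E = Real.exp (‖v‖ ^ 2 / 2) := by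
  have h := integral_cexp_inner_add_inner_mul_I_stdGaussian v 0
  simp only [inner_zero_right, norm_zero, Complex.ofReal_zero, ne_eq, OfNat.ofNat_ne_zero,
    not_false_eq_true, zero_pow, sub_zero, zero_mul, add_zero] at h
  exact_mod_cast h

theorem stdGaussian_map_add_const_eq_withDensity (v : E) :
    (stdGaussian E).map (· + v) = (stdGaussian E).withDensity
      fun x => .ofReal (Real.exp (⟪x, v⟫ - ‖v‖ ^ 2 / 2)) := by
  have htilted : (stdGaussian E).map (· + v) = (stdGaussian E).tilted (⟪·, v⟫) := by
    refine Measure.ext_of_charFun <| funext fun t => ?_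
    rw [charFun_map_add_const, charFun_stdGaussian, charFun_apply, integral_tilted]
    simp_rw [integral_exp_inner_stdGaussian, Complex.real_smul, Complex.ofReal_div,
      div_mul_eq_mul_div, Complex.ofReal_exp, ← Complex.exp_add]
    rw [integral_div, integral_cexp_inner_add_inner_mul_I_stdGaussian, ← Complex.exp_sub]
    congr 1
    push_cast
    ring
  rw [htilted, Measure.tilted, integral_exp_inner_stdGaussian]
  simp_rw [← Real.exp_sub]

theorem stdGaussian_conv_eq_withDensity (μ : Measure E) [SFinite μ] :
    stdGaussian E ∗ μ = (stdGaussian E).withDensity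
      fun x => ∫⁻ w, .ofReal (Real.exp (⟪x, w⟫ - ‖w‖ ^ 2 / 2)) ∂μ := by
  ext s hs
  have hshift (w : E) : stdGaussian E ((· + w) ⁻¹' s) =
      ∫⁻ x in s, .ofReal (Real.exp (⟪x, w⟫ - ‖w‖ ^ 2 / 2)) ∂stdGaussian E := by
    rw [← Measure.map_apply (measurable_add_const w) hs, stdGaussian_map_add_const_eq_withDensity,
      withDensity_apply _ hs]
  calc (stdGaussian E ∗ μ) s
      = ∫⁻ w, stdGaussian E ((· + w) ⁻¹' s) ∂μ := by
        rw [Measure.conv, Measure.map_apply measurable_add hs,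
          Measure.prod_apply_symm (measurable_add hs)]
        rfl
    _ = ∫⁻ x in s, ∫⁻ w, .ofReal (Real.exp (⟪x, w⟫ - ‖w‖ ^ 2 / 2)) ∂μ ∂stdGaussian E := by
        simp_rw [hshift]
        exact lintegral_lintegral_swap (by fun_prop)
    _ = _ := (withDensity_apply _ hs).symm

end StdGaussian

section SecondMoment

variable {E : Type*} [NormedAddCommGroup E] [InnerProductSpace ℝ E] [MeasurableSpace E]

theorem integral_norm_sq_starProjection_le {μ : Measure E} (hμ : MemLp id 2 μ) {c : ℝ}
    (hcov : ∀ x, ∫ w, ⟪x, w⟫ ^ 2 ∂μ ≤ c * ‖x‖ ^ 2) (K : Submodule ℝ E) [FiniteDimensional ℝ K] :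
    ∫ w, ‖K.starProjection w‖ ^ 2 ∂μ ≤ c * Module.finrank ℝ K := by
  let b := stdOrthonormalBasis ℝ K
  have hparseval (w : E) : ‖K.starProjection w‖ ^ 2 = ∑ j, ⟪(b j : E), w⟫ ^ 2 := by
    rw [K.starProjection_apply, Submodule.norm_coe, ← b.sum_sq_inner_right]
    simp only [K.inner_orthogonalProjectionOnto_eq_of_mem_left]
  calc ∫ w, ‖K.starProjection w‖ ^ 2 ∂μ
      = ∑ j, ∫ w, ⟪(b j : E), w⟫ ^ 2 ∂μ := by
        simp_rw [hparseval]
        exact integral_finsetSum _ fun j _ => (hμ.const_inner (b j : E)).integrable_sq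
    _ ≤ ∑ j, c * ‖(b j : E)‖ ^ 2 := Finset.sum_le_sum fun j _ => hcov (b j)
    _ = c * Module.finrank ℝ K := by simp [Submodule.norm_coe, mul_comm]

end SecondMoment

section GaussianMixture

variable {E : Type*} [NormedAddCommGroup E] [InnerProductSpace ℝ E] [FiniteDimensional ℝ E]
  [MeasurableSpace E] [BorelSpace E] {μ : Measure E} [IsProbabilityMeasure μ]

theorem tvDist_stdGaussian_conv_le (hμ : MemLp id 2 μ) (hmean : ∫ w, w ∂μ = 0) :
    tvDist (stdGaussian E) (stdGaussian E ∗ μ) ≤ (∫ w, ‖w‖ ^ 2 ∂μ) / 2 := by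
  refine tvDist_le_of_smul_le ?_
  rw [stdGaussian_conv_eq_withDensity, ← withDensity_const]
  refine withDensity_mono <| .of_forall fun x => ?_
  have hid : Integrable (fun w => w) μ := hμ.integrable one_le_two
  have hsq : Integrable (fun w => ‖w‖ ^ 2 / 2) μ := hμ.norm.integrable_sq.div_const 2
  have hinner : Integrable (fun w => ⟪x, w⟫) μ := hid.const_inner x
  calc ENNReal.ofReal (1 - (∫ w, ‖w‖ ^ 2 ∂μ) / 2)
      = .ofReal (∫ w, (⟪x, w⟫ - ‖w‖ ^ 2 / 2 + 1) ∂μ) := by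
        rw [integral_add (f := fun w => ⟪x, w⟫ - ‖w‖ ^ 2 / 2) (hinner.sub hsq)
          (integrable_const _), integral_sub hinner hsq, integral_inner hid, hmean, integral_div]
        simp [neg_add_eq_sub]
    _ ≤ ∫⁻ w, .ofReal (⟪x, w⟫ - ‖w‖ ^ 2 / 2 + 1) ∂μ :=
        ofReal_integral_le_lintegral_ofReal ((hinner.sub hsq).add (integrable_const _))
    _ ≤ ∫⁻ w, .ofReal (Real.exp (⟪x, w⟫ - ‖w‖ ^ 2 / 2)) ∂μ :=
        lintegral_mono fun w => ENNReal.ofReal_le_ofReal (Real.add_one_le_exp _)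

variable {F : Type*} [AddCommGroup F] [Module ℝ F] [TopologicalSpace F] [IsTopologicalAddGroup F]
  [ContinuousSMul ℝ F] [MeasurableSpace F] [BorelSpace F]

theorem tvDist_map_stdGaussian_conv_le (hμ : MemLp id 2 μ) (hmean : ∫ w, w ∂μ = 0)
    (T : E →ₗ[ℝ] F) :
    tvDist ((stdGaussian E).map T) ((stdGaussian E ∗ μ).map T) ≤
      (∫ w, ‖(LinearMap.ker T)ᗮ.starProjection w‖ ^ 2 ∂μ) / 2 := by
  set P := (LinearMap.ker T)ᗮ.starProjection
  have hT : Measurable T := T.continuous_of_finiteDimensional.measurable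
  have hP : Measurable P := P.continuous.measurable
  have hTP (w : E) : T (P w) = T w := by
    have hker := (LinearMap.ker T)ᗮ.sub_starProjection_mem_orthogonal w
    rw [Submodule.orthogonal_orthogonal, LinearMap.mem_ker, map_sub, sub_eq_zero] at hker
    exact hker.symm
  have := Measure.isProbabilityMeasure_map (μ := μ) hP.aemeasurable
  have hmemP : MemLp id 2 (μ.map P) :=
    (memLp_map_measure_iff (by fun_prop) hP.aemeasurable).2 (P.comp_memLp' hμ)
  have hmeanP : ∫ w, w ∂μ.map P = 0 := by
    rw [integral_map hP.aemeasurable (by fun_prop),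
      P.integral_comp_comm (φ := fun w => w) (hμ.integrable one_le_two), hmean, map_zero]
  rw [← map_conv_map_eq_map_conv T hT hP hTP,
    ← integral_map hP.aemeasurable (f := fun w => ‖w‖ ^ 2) (by fun_prop)]
  exact (tvDist_map_le hT).trans (tvDist_stdGaussian_conv_le hmemP hmeanP)

theorem tvDist_map_stdGaussian_conv_le_finrank_range (hμ : MemLp id 2 μ) (hmean : ∫ w, w ∂μ = 0)
    {c : ℝ} (hcov : ∀ x, ∫ w, ⟪x, w⟫ ^ 2 ∂μ ≤ c * ‖x‖ ^ 2) (T : E →ₗ[ℝ] F) :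
    tvDist ((stdGaussian E).map T) ((stdGaussian E ∗ μ).map T) ≤
      c * Module.finrank ℝ (LinearMap.range T) / 2 := by
  have hrank : Module.finrank ℝ (LinearMap.ker T)ᗮ = Module.finrank ℝ (LinearMap.range T) := by
    have := (LinearMap.ker T).finrank_add_finrank_orthogonal
    have := T.finrank_range_add_finrank_ker
    omega
  rw [← hrank]
  refine (tvDist_map_stdGaussian_conv_le hμ hmean T).trans ?_
  gcongr
  exact integral_norm_sq_starProjection_le hμ hcov _

end GaussianMixture

section SpikedColumn

variable {d n : ℕ}

instance : IsProbabilityMeasure (gaussianVec d) := by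
  unfold gaussianVec
  infer_instance

instance : IsProbabilityMeasure (gaussianMatrix d n) :=
  inferInstanceAs (IsProbabilityMeasure (Measure.pi fun _ => Measure.pi fun _ => gaussianReal 0 1))

theorem gaussianVec_map_toLp (d : ℕ) :
    (gaussianVec d).map (WithLp.toLp 2) = stdGaussian (EuclideanSpace ℝ (Fin d)) :=
  map_pi_eq_stdGaussian

/-- The entries of a `d × n` matrix as a vector of Euclidean space; this carries `gaussianMatrix`
to the standard Gaussian measure. -/
noncomputable def vectorize (A : Matrix (Fin d) (Fin n) ℝ) : EuclideanSpace ℝ (Fin d × Fin n) :=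
  WithLp.toLp 2 fun p => A p.1 p.2

theorem measurable_vectorize : Measurable (vectorize (d := d) (n := n)) := by
  unfold vectorize
  fun_prop

theorem measurable_of_vectorize {Ω : Type*} [MeasurableSpace Ω]
    {f : Ω → Matrix (Fin d) (Fin n) ℝ} (hf : Measurable fun ω => vectorize (f ω)) :
    Measurable f :=
  measurable_pi_iff.2 fun a => measurable_pi_iff.2 fun b =>
    (EuclideanSpace.proj (𝕜 := ℝ) (a, b)).continuous.measurable.comp hf

theorem gaussianMatrix_map_vectorize (d n : ℕ) :
    (gaussianMatrix d n).map vectorize = stdGaussian (EuclideanSpace ℝ (Fin d × Fin n)) := by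
  have huncurry : (gaussianMatrix d n).map (MeasurableEquiv.curry (Fin d) (Fin n) ℝ).symm =
      Measure.pi fun _ => gaussianReal 0 1 := by
    simp_rw [gaussianMatrix, ← Measure.infinitePi_eq_pi]
    exact Measure.infinitePi_map_curry_symm _
  rw [← map_pi_eq_stdGaussian, ← huncurry]
  exact (Measure.map_map (by fun_prop) (by fun_prop)).symm

/-- The spike `α • u eᵢᵀ`, as a vector indexed by the entries of a `d × n` matrix. -/
noncomputable def spikeVec (α : ℝ) (u : EuclideanSpace ℝ (Fin d)) (i : Fin n) :
    EuclideanSpace ℝ (Fin d × Fin n) :=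
  WithLp.toLp 2 fun p => if p.2 = i then α * u p.1 else 0

theorem measurable_spikeVec (α : ℝ) :
    Measurable fun x : EuclideanSpace ℝ (Fin d) × Fin n => spikeVec α x.1 x.2 := by
  refine measurable_from_prod_countable_left fun i => ?_
  unfold spikeVec
  refine (WithLp.measurable_toLp _ _).comp (measurable_pi_iff.2 fun p => ?_)
  by_cases hp : p.2 = i <;> simp only [hp, if_true, if_false] <;> fun_prop

theorem norm_spikeVec (α : ℝ) (u : EuclideanSpace ℝ (Fin d)) (i : Fin n) :
    ‖spikeVec α u i‖ = |α| * ‖u‖ := by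
  rw [← Real.norm_eq_abs, ← norm_smul]
  simp [EuclideanSpace.norm_eq, spikeVec, Fintype.sum_prod_type, apply_ite]

theorem inner_spikeVec (α : ℝ) (x : EuclideanSpace ℝ (Fin d × Fin n))
    (u : EuclideanSpace ℝ (Fin d)) (i : Fin n) :
    ⟪x, spikeVec α u i⟫ = ⟪α • WithLp.toLp 2 fun a => x (a, i), u⟫ := by
  simp [PiLp.inner_apply, spikeVec, Fintype.sum_prod_type, mul_comm, mul_assoc, mul_left_comm]

instance : IsFiniteMeasure (uniformFin n) :=
  ⟨by simpa [uniformFin] using (ENNReal.inv_mul_le_one _).trans_lt ENNReal.one_lt_top⟩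

instance [NeZero n] : IsProbabilityMeasure (uniformFin n) :=
  ⟨by simp [uniformFin, ENNReal.inv_mul_cancel, NeZero.ne]⟩

theorem integral_uniformFin (f : Fin n → ℝ) :
    ∫ i, f i ∂uniformFin n = (∑ i, f i) / n := by
  rw [uniformFin, integral_smul_measure,
    integral_finsetSum_measure fun i _ => integrable_dirac (by simp)]
  simp [div_eq_inv_mul]

/-- The law of the spike `α • u eᵢᵀ` for a standard Gaussian vector `u` and an independent uniform
column `i`; it is the measure with which `spikedGaussian` convolves the Gaussian matrix. -/
noncomputable def spikeLaw (d n : ℕ) (α : ℝ) : Measure (EuclideanSpace ℝ (Fin d × Fin n)) :=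
  ((stdGaussian (EuclideanSpace ℝ (Fin d))).prod (uniformFin n)).map
    fun x => spikeVec α x.1 x.2

instance (α : ℝ) : IsFiniteMeasure (spikeLaw d n α) := by
  unfold spikeLaw
  infer_instance

instance [NeZero n] (α : ℝ) : IsProbabilityMeasure (spikeLaw d n α) :=
  Measure.isProbabilityMeasure_map (measurable_spikeVec α).aemeasurable

theorem memLp_id_spikeLaw (d n : ℕ) (α : ℝ) : MemLp id 2 (spikeLaw d n α) := by
  rw [spikeLaw, memLp_map_measure_iff (by fun_prop) (measurable_spikeVec α).aemeasurable]
  have hfst : MemLp (fun x : EuclideanSpace ℝ (Fin d) × Fin n => x.1) 2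
      ((stdGaussian (EuclideanSpace ℝ (Fin d))).prod (uniformFin n)) :=
    (IsGaussian.memLp_two_id (μ := stdGaussian _)).comp_fst _
  refine (hfst.const_smul α).of_le (measurable_spikeVec α).aestronglyMeasurable <|
    .of_forall fun x => ?_
  simp [norm_spikeVec, norm_smul]

theorem integral_spikeLaw {α : ℝ} {f : EuclideanSpace ℝ (Fin d × Fin n) → ℝ}
    (hf : Integrable f (spikeLaw d n α)) :
    ∫ w, f w ∂spikeLaw d n α = (∑ i, ∫ u, f (spikeVec α u i) ∂stdGaussian _) / n := by
  have hmeas := (measurable_spikeVec (d := d) (n := n) α).aemeasurable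
    (μ := (stdGaussian _).prod (uniformFin n))
  rw [spikeLaw, integral_map hmeas hf.aestronglyMeasurable,
    integral_prod_symm (fun x => f (spikeVec α x.1 x.2))
      ((integrable_map_measure hf.aestronglyMeasurable hmeas).1 hf),
    integral_uniformFin]

theorem integral_id_spikeLaw (d n : ℕ) (α : ℝ) : ∫ w, w ∂spikeLaw d n α = 0 := by
  have hid : Integrable (fun w => w) (spikeLaw d n α) :=
    (memLp_id_spikeLaw d n α).integrable one_le_two
  refine ext_inner_left ℝ fun x => ?_
  rw [← integral_inner hid, integral_spikeLaw (hid.const_inner x)]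
  simp [inner_spikeVec, integral_inner_stdGaussian]

theorem integral_inner_sq_spikeLaw (α : ℝ) (x : EuclideanSpace ℝ (Fin d × Fin n)) :
    ∫ w, ⟪x, w⟫ ^ 2 ∂spikeLaw d n α = α ^ 2 / n * ‖x‖ ^ 2 := by
  have hint : Integrable (fun w => ⟪x, w⟫ ^ 2) (spikeLaw d n α) :=
    ((memLp_id_spikeLaw d n α).const_inner x).integrable_sq
  rw [integral_spikeLaw hint]
  simp_rw [inner_spikeVec, integral_inner_sq_stdGaussian, norm_smul, mul_pow, ← Finset.mul_sum]
  simp [EuclideanSpace.real_norm_sq_eq, Fintype.sum_prod_type_right, div_mul_eq_mul_div]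

theorem spikeLaw_eq_map_gaussianVec (d n : ℕ) (α : ℝ) :
    spikeLaw d n α = ((gaussianVec d).prod (uniformFin n)).map
      fun x => spikeVec α (WithLp.toLp 2 x.1) x.2 := by
  have hprod : (stdGaussian (EuclideanSpace ℝ (Fin d))).prod (uniformFin n) =
      ((gaussianVec d).prod (uniformFin n)).map (Prod.map (WithLp.toLp 2) id) := by
    rw [← Measure.map_prod_map _ _ (by fun_prop) measurable_id, gaussianVec_map_toLp,
      Measure.map_id]
  rw [spikeLaw, hprod, Measure.map_map (measurable_spikeVec α) (by fun_prop)]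
  rfl

theorem spikedGaussian_map_vectorize (d n : ℕ) (α : ℝ) :
    (spikedGaussian d n α).map vectorize =
      stdGaussian (EuclideanSpace ℝ (Fin d × Fin n)) ∗ spikeLaw d n α := by
  have hspike : Measurable fun x : (Fin d → ℝ) × Fin n => spikeVec α (WithLp.toLp 2 x.1) x.2 :=
    (measurable_spikeVec α).comp (f := Prod.map (WithLp.toLp 2) id) (by fun_prop)
  have hsum : Measurable fun x : Matrix (Fin d) (Fin n) ℝ × ((Fin d → ℝ) × Fin n) =>
      x.1 + Matrix.of fun a b => if b = x.2.2 then α * x.2.1 a else 0 :=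
    measurable_of_vectorize <|
      (measurable_vectorize.comp measurable_fst).add (hspike.comp measurable_snd)
  rw [← gaussianMatrix_map_vectorize, spikeLaw_eq_map_gaussianVec,
    map_conv_map measurable_vectorize hspike, spikedGaussian,
    Measure.map_map measurable_vectorize hsum]
  rfl

/-- The sketch `sketchApply L` as a linear map on vectorized matrices. -/
noncomputable def sketchMap {k : ℕ} (L : Matrix (Fin k) (Fin d × Fin n) ℝ) :
    EuclideanSpace ℝ (Fin d × Fin n) →ₗ[ℝ] (Fin k → ℝ) :=
  L.mulVecLin ∘ₗ (WithLp.linearEquiv 2 ℝ (Fin d × Fin n → ℝ)).toLinearMap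

theorem map_sketchApply {k : ℕ} (L : Matrix (Fin k) (Fin d × Fin n) ℝ)
    (μ : Measure (Matrix (Fin d) (Fin n) ℝ)) :
    μ.map (sketchApply L) = (μ.map vectorize).map (sketchMap L) := by
  rw [Measure.map_map (sketchMap L).continuous_of_finiteDimensional.measurable measurable_vectorize]
  rfl

end SpikedColumn

/-- There is an absolute constant C > 0 such that for all positive n, d, k, every α > 0
and every linear sketch L : ℝ^{d×n} → ℝ^k, the total variation distance between the
pushforwards of G₁ (i.i.d. Gaussian d×n matrix) and G₂[α] (Gaussian matrix with a random
column spiked by α·u for Gaussian u) under L is at most C·α²·k/n. -/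
theorem tv_dist_sketch_spiked_column :
    ∃ C : ℝ, 0 < C ∧
      ∀ (d n k : ℕ), 0 < d → 0 < n → 0 < k → ∀ α : ℝ, 0 < α →
        ∀ L : Matrix (Fin k) (Fin d × Fin n) ℝ,
          tvDist ((gaussianMatrix d n).map (sketchApply L))
              ((spikedGaussian d n α).map (sketchApply L))
            ≤ C * α ^ 2 * k / n := by
  refine ⟨1 / 2, by norm_num, fun d n k _ hn _ α _ L => ?_⟩
  have : NeZero n := ⟨hn.ne'⟩
  calc tvDist ((gaussianMatrix d n).map (sketchApply L))
        ((spikedGaussian d n α).map (sketchApply L))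
      = tvDist ((stdGaussian _).map (sketchMap L))
          ((stdGaussian _ ∗ spikeLaw d n α).map (sketchMap L)) := by
        rw [map_sketchApply, map_sketchApply, gaussianMatrix_map_vectorize,
          spikedGaussian_map_vectorize]
    _ ≤ α ^ 2 / n * Module.finrank ℝ (LinearMap.range (sketchMap L)) / 2 :=
        tvDist_map_stdGaussian_conv_le_finrank_range (memLp_id_spikeLaw d n α)
          (integral_id_spikeLaw d n α) (fun x => (integral_inner_sq_spikeLaw α x).le) _
    _ ≤ α ^ 2 / n * k / 2 := by gcongr; exact (Submodule.finrank_le _).trans_eq (by simp)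
    _ = 1 / 2 * α ^ 2 * k / n := by ring
end

section
/- Let p ∈ [1, 2] and κ ≥ 1. There exists n₀ such that for every n ≥ n₀ there exists s > 0 with: Pr_{G∼G₁}[‖G‖_{1→p} ≤ s] ≥ 1 − 1/n and Pr_{G'∼G₂[κ]}[‖G'‖_{1→p} ≥ κ·s] ≥ 1 − 1/n, where G₁ and G₂[κ] are distributions over n×n matrices. -/
open MeasureTheory ENNReal

/-!
The 1→p norm of a matrix is the largest `ℓ_p` norm of a column, and adding an independent
`N(0, κ²)` vector to a standard Gaussian column only rescales its law by `√(1 + κ²) > |κ|`.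
For `p ≤ 2` the variables `|g|^p` have exponential moments, so by Chernoff's bound the `ℓ_p` norm
of a Gaussian vector in `ℝ^m` is within any constant factor `> 1` of `(m 𝔼|g|^p)^(1/p)` up to an
exponentially small probability. A union bound over the columns controls the unspiked norm, and the
spiked column alone bounds the spiked norm from below.
-/

open ProbabilityTheory

section Chernoff

variable {Ω : Type*} [MeasurableSpace Ω] {μ : Measure Ω} {X : Ω → ℝ} {c : ℝ}

theorem zero_mem_interior_integrableExpSet_neg (hX : 0 ∈ interior (integrableExpSet X μ)) :
    0 ∈ interior (integrableExpSet (fun ω => -X ω) μ) := by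
  have hneg : integrableExpSet (fun ω => -X ω) μ = Neg.neg ⁻¹' integrableExpSet X μ := by
    ext t
    simp [integrableExpSet]
  rw [mem_interior_iff_mem_nhds] at hX ⊢
  rw [hneg]
  exact continuous_neg.continuousAt.preimage_mem_nhds (by rwa [neg_zero])

variable [IsProbabilityMeasure μ]

theorem exists_pos_exp_mul_mgf_lt_one (hX : 0 ∈ interior (integrableExpSet X μ))
    (hc : ∫ ω, X ω ∂μ < c) :
    ∃ t ∈ integrableExpSet X μ, 0 < t ∧ Real.exp (-t * c) * mgf X μ t < 1 := by
  have hderiv : HasDerivAt (fun t => Real.exp (-t * c) * mgf X μ t) (∫ ω, X ω ∂μ - c) 0 := by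
    convert! (((hasDerivAt_id (0 : ℝ)).neg.mul_const c).exp).mul (hasDerivAt_mgf hX) using 1
    simp [sub_eq_neg_add]
  have hslope := ((hasDerivWithinAt_iff_tendsto_slope' (s := Set.Ioi (0 : ℝ)) (by simp)).1
    hderiv.hasDerivWithinAt).eventually_lt_const (sub_neg.2 hc)
  have hint : ∀ᶠ t in nhdsWithin (0 : ℝ) (Set.Ioi 0), t ∈ integrableExpSet X μ :=
    nhdsWithin_le_nhds (mem_interior_iff_mem_nhds.1 hX)
  obtain ⟨t, ht, htX, ht0⟩ := (hslope.and (hint.and self_mem_nhdsWithin)).exists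
  rw [slope_def_field, sub_zero, div_lt_iff₀ ht0, zero_mul, sub_neg] at ht
  exact ⟨t, htX, ht0, by simpa using ht⟩

theorem measureReal_pi_sum_ge_le {ι : Type*} [Fintype ι] {t : ℝ} (ht : 0 ≤ t)
    (htX : t ∈ integrableExpSet X μ) :
    (Measure.pi fun _ : ι => μ).real {v | Fintype.card ι * c ≤ ∑ i, X (v i)} ≤
      (Real.exp (-t * c) * mgf X μ t) ^ Fintype.card ι := by
  have hexp : (fun v : ι → Ω => Real.exp (t * ∑ i, X (v i))) =
      fun v => ∏ i, Real.exp (t * X (v i)) := by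
    simp_rw [Finset.mul_sum, Real.exp_sum]
  have hmgf : mgf (fun v : ι → Ω => ∑ i, X (v i)) (Measure.pi fun _ => μ) t =
      mgf X μ t ^ Fintype.card ι := by
    rw [mgf, hexp, integral_fintype_prod_eq_pow fun ω => Real.exp (t * X ω), mgf]
  calc _ ≤ Real.exp (-t * (Fintype.card ι * c)) * mgf X μ t ^ Fintype.card ι :=
        hmgf ▸ measure_ge_le_exp_mul_mgf _ ht (hexp ▸ Integrable.fintype_prod fun _ => htX)
    _ = _ := by
        rw [mul_pow, ← Real.exp_nat_mul]
        ring_nf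

theorem exists_measureReal_pi_sum_ge_le_pow (hX : 0 ∈ interior (integrableExpSet X μ))
    (hc : ∫ ω, X ω ∂μ < c) :
    ∃ ρ ∈ Set.Ico (0 : ℝ) 1, ∀ m : ℕ,
      (Measure.pi fun _ : Fin m => μ).real {v | m * c ≤ ∑ i, X (v i)} ≤ ρ ^ m := by
  obtain ⟨t, htX, ht0, ht1⟩ := exists_pos_exp_mul_mgf_lt_one hX hc
  refine ⟨_, ⟨mul_nonneg (Real.exp_nonneg _) mgf_nonneg, ht1⟩, fun m => ?_⟩
  simpa only [Fintype.card_fin] using measureReal_pi_sum_ge_le (ι := Fin m) ht0.le htX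

theorem exists_measureReal_pi_sum_le_le_pow (hX : 0 ∈ interior (integrableExpSet X μ))
    (hc : c < ∫ ω, X ω ∂μ) :
    ∃ ρ ∈ Set.Ico (0 : ℝ) 1, ∀ m : ℕ,
      (Measure.pi fun _ : Fin m => μ).real {v | ∑ i, X (v i) ≤ m * c} ≤ ρ ^ m := by
  simpa only [Finset.sum_neg_distrib, mul_neg, neg_le_neg_iff] using
    exists_measureReal_pi_sum_ge_le_pow (c := -c) (zero_mem_interior_integrableExpSet_neg hX)
      (by rwa [integral_neg, neg_lt_neg_iff])

end Chernoff

section GaussianMoments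

variable {r : ℝ}

theorem zero_mem_interior_integrableExpSet_norm_rpow {E : Type*} [NormedAddCommGroup E]
    [NormedSpace ℝ E] [MeasurableSpace E] [BorelSpace E] [SecondCountableTopology E]
    [CompleteSpace E] (μ : Measure E) [IsGaussian μ] (hr0 : 0 ≤ r) (hr2 : r ≤ 2) :
    0 ∈ interior (integrableExpSet (fun x => ‖x‖ ^ r) μ) := by
  obtain ⟨C, hC, hint⟩ := IsGaussian.exists_integrable_exp_sq μ
  refine mem_interior.2 ⟨Set.Ioo (-C) C, fun t ht => ?_, isOpen_Ioo, by simpa⟩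
  refine (hint.const_mul (Real.exp C)).mono' (by fun_prop) (.of_forall fun x => ?_)
  rw [Real.norm_eq_abs, Real.abs_exp, ← Real.exp_add, Real.exp_le_exp]
  have hx : ‖x‖ ^ r ≤ 1 + ‖x‖ ^ 2 := by
    rcases le_total ‖x‖ 1 with h | h
    · exact (Real.rpow_le_one (norm_nonneg x) h hr0).trans (by simp)
    · have := Real.rpow_le_rpow_of_exponent_le h hr2
      rw [Real.rpow_two] at this
      linarith
  calc t * ‖x‖ ^ r ≤ C * ‖x‖ ^ r := by gcongr; exact ht.2.le
    _ ≤ C * (1 + ‖x‖ ^ 2) := by gcongr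
    _ = C + C * ‖x‖ ^ 2 := by ring

theorem zero_mem_interior_integrableExpSet_abs_rpow (hr0 : 0 ≤ r) (hr2 : r ≤ 2) :
    0 ∈ interior (integrableExpSet (fun x => |x| ^ r) (gaussianReal 0 1)) :=
  zero_mem_interior_integrableExpSet_norm_rpow _ hr0 hr2

theorem integral_abs_rpow_gaussianReal_pos (hr0 : 0 ≤ r) :
    0 < ∫ x, |x| ^ r ∂gaussianReal 0 1 := by
  have hint : Integrable (fun x : ℝ => |x| ^ r) (gaussianReal 0 1) := by
    simpa [hr0] using (IsGaussian.memLp_id (gaussianReal 0 1) (.ofReal r)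
      ENNReal.ofReal_ne_top).integrable_norm_rpow'
  have := nullSingletonClass_gaussianReal (μ := 0) (v := 1) one_ne_zero
  have hsupp : ({0}ᶜ : Set ℝ) ⊆ Function.support fun x : ℝ => |x| ^ r := fun x hx =>
    (Real.rpow_pos_of_pos (abs_pos.2 hx) r).ne'
  rw [integral_pos_iff_support_of_nonneg (fun x => by positivity) hint]
  calc (0 : ℝ≥0∞) < gaussianReal 0 1 {0}ᶜ := by
        simp [prob_compl_eq_one_sub (measurableSet_singleton (0 : ℝ))]
    _ ≤ _ := measure_mono hsupp

end GaussianMoments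

section LpNorm

variable {p : ℝ≥0∞} {m n : ℕ}

theorem lpNorm_eq_norm_toLp (hp : 1 ≤ p) (x : Fin n → ℝ) :
    lpNorm p x = ‖WithLp.toLp p x‖ := by
  rcases eq_or_ne p ∞ with rfl | hp'
  · simp [_root_.lpNorm, PiLp.norm_eq_ciSup]
  · simp [_root_.lpNorm, hp', PiLp.norm_eq_sum (ENNReal.toReal_pos (by positivity) hp')]

theorem lpNorm_nonneg (x : Fin n → ℝ) : 0 ≤ lpNorm p x := by
  unfold _root_.lpNorm
  split_ifs
  · exact Real.iSup_nonneg fun i => abs_nonneg _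
  · positivity

theorem lpNorm_one_eq_sum_abs (x : Fin n → ℝ) : lpNorm 1 x = ∑ i, |x i| := by
  simp [_root_.lpNorm]

theorem lpNorm_smul (hp : 1 ≤ p) (c : ℝ) (x : Fin n → ℝ) :
    lpNorm p (c • x) = |c| * lpNorm p x := by
  have := Fact.mk hp
  simp only [lpNorm_eq_norm_toLp hp, WithLp.toLp_smul, norm_smul, Real.norm_eq_abs]

theorem lpNorm_rpow_toReal (hp0 : p ≠ 0) (hp : p ≠ ∞) (x : Fin n → ℝ) :
    lpNorm p x ^ p.toReal = ∑ i, |x i| ^ p.toReal := by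
  rw [_root_.lpNorm, if_neg hp, one_div,
    Real.rpow_inv_rpow (by positivity) (ENNReal.toReal_ne_zero.2 ⟨hp0, hp⟩)]

theorem measurable_lpNorm : Measurable fun x : Fin n → ℝ => lpNorm p x := by
  unfold _root_.lpNorm
  split_ifs <;> fun_prop

theorem lpNorm_mulVec_le (hp : 1 ≤ p) (A : Matrix (Fin m) (Fin n) ℝ) (x : Fin n → ℝ) :
    lpNorm p (A.mulVec x) ≤ (⨆ i, lpNorm p (A.col i)) * lpNorm 1 x := by
  have := Fact.mk hp
  have hcol (i : Fin n) : ‖WithLp.toLp p (A.col i)‖ ≤ ⨆ i, lpNorm p (A.col i) :=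
    lpNorm_eq_norm_toLp hp (A.col i) ▸
      le_ciSup (f := fun i => lpNorm p (A.col i)) (Set.finite_range _).bddAbove i
  calc lpNorm p (A.mulVec x) = ‖∑ i, x i • WithLp.toLp p (A.col i)‖ := by
        simp only [lpNorm_eq_norm_toLp hp, Matrix.mulVec_eq_sum, op_smul_eq_smul, WithLp.toLp_sum,
          WithLp.toLp_smul]
        rfl
    _ ≤ ∑ i, ‖x i • WithLp.toLp p (A.col i)‖ := norm_sum_le _ _
    _ ≤ ∑ i, (⨆ i, lpNorm p (A.col i)) * |x i| := by
        refine Finset.sum_le_sum fun i _ => ?_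
        rw [norm_smul, Real.norm_eq_abs, mul_comm]
        exact mul_le_mul_of_nonneg_right (hcol i) (abs_nonneg _)
    _ = (⨆ i, lpNorm p (A.col i)) * lpNorm 1 x := by rw [← Finset.mul_sum, lpNorm_one_eq_sum_abs]

theorem opNorm_one_eq_iSup_lpNorm_col (hp : 1 ≤ p) (A : Matrix (Fin m) (Fin n) ℝ) :
    opNorm 1 p A = ⨆ i, lpNorm p (A.col i) := by
  have hnonneg : 0 ≤ ⨆ i, lpNorm p (A.col i) := Real.iSup_nonneg fun _ => lpNorm_nonneg _
  have hratio (x : Fin n → ℝ) :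
      lpNorm p (A.mulVec x) / lpNorm 1 x ≤ ⨆ i, lpNorm p (A.col i) :=
    div_le_of_le_mul₀ (lpNorm_nonneg x) hnonneg (lpNorm_mulVec_le hp A x)
  refine le_antisymm (ciSup_le hratio) (Real.iSup_le (fun i => ?_)
    (Real.iSup_nonneg fun x => div_nonneg (lpNorm_nonneg _) (lpNorm_nonneg _)))
  have hsingle : lpNorm 1 (Pi.single i 1 : Fin n → ℝ) = 1 := by
    simp [lpNorm_one_eq_sum_abs, Pi.single_apply, apply_ite abs]
  have hle := le_ciSup ⟨_, Set.forall_mem_range.2 hratio⟩ (Pi.single i 1)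
  rwa [hsingle, Matrix.mulVec_single_one, div_one] at hle

theorem lpNorm_col_le_opNorm_one (hp : 1 ≤ p) (A : Matrix (Fin m) (Fin n) ℝ) (i : Fin n) :
    lpNorm p (A.col i) ≤ opNorm 1 p A := by
  rw [opNorm_one_eq_iSup_lpNorm_col hp]
  exact le_ciSup (f := fun i => lpNorm p (A.col i)) (Set.finite_range _).bddAbove i

theorem measurable_opNorm_one (hp : 1 ≤ p) :
    Measurable fun A : Matrix (Fin m) (Fin n) ℝ => opNorm 1 p A := by
  simp_rw [opNorm_one_eq_iSup_lpNorm_col hp]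
  refine Measurable.iSup fun i => measurable_lpNorm.comp (measurable_pi_lambda _ fun a => ?_)
  exact (measurable_pi_apply i).comp (measurable_pi_apply a)

end LpNorm

instance isProbabilityMeasure_gaussianVec (m : ℕ) : IsProbabilityMeasure (gaussianVec m) := by
  unfold gaussianVec
  infer_instance

instance isProbabilityMeasure_gaussianMatrix (m n : ℕ) :
    IsProbabilityMeasure (gaussianMatrix m n) :=
  inferInstanceAs (IsProbabilityMeasure
    (Measure.pi fun _ : Fin m => Measure.pi fun _ : Fin n => gaussianReal 0 1))

instance isProbabilityMeasure_uniformFin (n : ℕ) [NeZero n] :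
    IsProbabilityMeasure (uniformFin n) where
  measure_univ := by
    simp [uniformFin, ENNReal.inv_mul_cancel, NeZero.ne n]

section GaussianVec

variable {p : ℝ≥0∞} {a : ℝ}

/-- The scale `(𝔼 ‖g‖_p ^ p) ^ (1 / p) = (m 𝔼 |g₁| ^ p) ^ (1 / p)` around which the `ℓ_p` norm of a
standard Gaussian vector `g` in `ℝ^m` concentrates, for `0 < p < ∞`. -/
noncomputable def gaussianLpScale (p : ℝ≥0∞) (m : ℕ) : ℝ :=
  (m * ∫ x, |x| ^ p.toReal ∂gaussianReal 0 1) ^ (1 / p.toReal)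

theorem gaussianLpScale_nonneg (m : ℕ) : 0 ≤ gaussianLpScale p m := by
  unfold gaussianLpScale
  positivity

theorem gaussianLpScale_pos {m : ℕ} (hm : m ≠ 0) : 0 < gaussianLpScale p m := by
  have := integral_abs_rpow_gaussianReal_pos (ENNReal.toReal_nonneg (a := p))
  unfold gaussianLpScale
  positivity

theorem mul_gaussianLpScale_rpow_toReal (hp0 : p ≠ 0) (hp : p ≠ ∞) (ha : 0 ≤ a) (m : ℕ) :
    (a * gaussianLpScale p m) ^ p.toReal =
      m * (a ^ p.toReal * ∫ x, |x| ^ p.toReal ∂gaussianReal 0 1) := by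
  rw [Real.mul_rpow ha (gaussianLpScale_nonneg m), gaussianLpScale, one_div,
    Real.rpow_inv_rpow (by positivity) (ENNReal.toReal_ne_zero.2 ⟨hp0, hp⟩), mul_left_comm]

theorem exists_gaussianVec_lt_lpNorm_le_pow (hp0 : p ≠ 0) (hp2 : p ≤ 2) (ha : 1 < a) :
    ∃ ρ ∈ Set.Ico (0 : ℝ) 1, ∀ m : ℕ,
      (gaussianVec m).real {v | a * gaussianLpScale p m < lpNorm p v} ≤ ρ ^ m := by
  have hp : p ≠ ∞ := (hp2.trans_lt (by simp)).ne
  have hr0 : 0 < p.toReal := ENNReal.toReal_pos hp0 hp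
  have hr2 : p.toReal ≤ 2 := by simpa using ENNReal.toReal_mono (by simp) hp2
  obtain ⟨ρ, hρ, htail⟩ := exists_measureReal_pi_sum_ge_le_pow
    (zero_mem_interior_integrableExpSet_abs_rpow hr0.le hr2)
    (lt_mul_of_one_lt_left (integral_abs_rpow_gaussianReal_pos hr0.le)
      (Real.one_lt_rpow ha hr0))
  refine ⟨ρ, hρ, fun m => (measureReal_mono fun v hv => ?_).trans (htail m)⟩
  simpa only [Set.mem_ofPred_eq, lpNorm_rpow_toReal hp0 hp,
    mul_gaussianLpScale_rpow_toReal hp0 hp (zero_le_one.trans ha.le)] using Real.rpow_le_rpow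
      (mul_nonneg (zero_le_one.trans ha.le) (gaussianLpScale_nonneg m)) (le_of_lt hv) hr0.le

theorem exists_gaussianVec_lpNorm_lt_le_pow (hp0 : p ≠ 0) (hp2 : p ≤ 2) (ha0 : 0 ≤ a)
    (ha1 : a < 1) :
    ∃ ρ ∈ Set.Ico (0 : ℝ) 1, ∀ m : ℕ,
      (gaussianVec m).real {v | lpNorm p v < a * gaussianLpScale p m} ≤ ρ ^ m := by
  have hp : p ≠ ∞ := (hp2.trans_lt (by simp)).ne
  have hr0 : 0 < p.toReal := ENNReal.toReal_pos hp0 hp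
  have hr2 : p.toReal ≤ 2 := by simpa using ENNReal.toReal_mono (by simp) hp2
  obtain ⟨ρ, hρ, htail⟩ := exists_measureReal_pi_sum_le_le_pow
    (zero_mem_interior_integrableExpSet_abs_rpow hr0.le hr2)
    (mul_lt_of_lt_one_left (integral_abs_rpow_gaussianReal_pos hr0.le)
      (Real.rpow_lt_one ha0 ha1 hr0))
  refine ⟨ρ, hρ, fun m => (measureReal_mono fun v hv => ?_).trans (htail m)⟩
  simpa only [Set.mem_ofPred_eq, lpNorm_rpow_toReal hp0 hp,
    mul_gaussianLpScale_rpow_toReal hp0 hp ha0] using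
    Real.rpow_le_rpow (lpNorm_nonneg v) (le_of_lt hv) hr0.le

end GaussianVec

section Columns

variable {p : ℝ≥0∞} (m : ℕ) {n : ℕ} (κ : ℝ) (t : ℝ)

theorem measurePreserving_col (i : Fin n) :
    MeasurePreserving (fun G : Matrix (Fin m) (Fin n) ℝ => G.col i)
      (gaussianMatrix m n) (gaussianVec m) :=
  measurePreserving_pi _ _ (f := fun _ => Function.eval i)
    fun _ => measurePreserving_eval (fun _ => gaussianReal 0 1) i

theorem gaussianMatrix_lt_opNorm_one_le (hp : 1 ≤ p) (ht : 0 ≤ t) :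
    (gaussianMatrix m n).real {G | t < opNorm 1 p G} ≤
      n * (gaussianVec m).real {v | t < lpNorm p v} := by
  have hcover : {G : Matrix (Fin m) (Fin n) ℝ | t < opNorm 1 p G} ⊆
      ⋃ i, {G | t < lpNorm p (G.col i)} := by
    intro G hG
    by_contra hcol
    simp only [Set.mem_iUnion, Set.mem_ofPred_eq, not_exists, not_lt] at hcol
    exact hG.not_ge (opNorm_one_eq_iSup_lpNorm_col hp G ▸ Real.iSup_le hcol ht)
  calc _ ≤ ∑ i : Fin n, (gaussianMatrix m n).real {G | t < lpNorm p (G.col i)} :=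
        (measureReal_mono hcover).trans (measureReal_iUnion_fintype_le _)
    _ = ∑ _ : Fin n, (gaussianVec m).real {v | t < lpNorm p v} :=
        Finset.sum_congr rfl fun i _ => (measurePreserving_col m i).measureReal_preimage
          (measurableSet_lt measurable_const measurable_lpNorm).nullMeasurableSet
    _ = _ := by simp

theorem map_add_const_mul_gaussianReal_prod :
    ((gaussianReal 0 1).prod (gaussianReal 0 1)).map (fun z => z.1 + κ * z.2) =
      (gaussianReal 0 1).map (√(1 + κ ^ 2) * ·) := by
  have hcomp : (fun z : ℝ × ℝ => z.1 + κ * z.2) =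
      (fun z => z.1 + z.2) ∘ Prod.map id (κ * ·) := rfl
  rw [hcomp, ← Measure.map_map (by fun_prop) (by fun_prop),
    ← Measure.map_prod_map _ _ measurable_id (by fun_prop), Measure.map_id,
    gaussianReal_map_const_mul, gaussianReal_map_const_mul, ← Measure.conv,
    gaussianReal_conv_gaussianReal]
  congr 1
  · simp
  · ext
    simp [Real.sq_sqrt (by positivity : 0 ≤ 1 + κ ^ 2)]

theorem measurePreserving_add_const_smul_gaussianVec :
    MeasurePreserving (fun z => z.1 + κ • z.2) ((gaussianVec m).prod (gaussianVec m))
      ((gaussianVec m).map (√(1 + κ ^ 2) • ·)) := by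
  have : IsProbabilityMeasure ((gaussianReal 0 1).map (√(1 + κ ^ 2) * ·)) :=
    Measure.isProbabilityMeasure_map (by fun_prop)
  have hscaled : (gaussianVec m).map (√(1 + κ ^ 2) • ·) =
      Measure.pi fun _ => (gaussianReal 0 1).map (√(1 + κ ^ 2) * ·) :=
    Measure.pi_map_pi fun _ => (measurable_const_mul _).aemeasurable
  rw [hscaled]
  exact (measurePreserving_pi _ _ fun _ =>
    ⟨by fun_prop, map_add_const_mul_gaussianReal_prod κ⟩).comp
    (measurePreserving_arrowProdEquivProdArrow ℝ ℝ (Fin m)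
      (fun _ => gaussianReal 0 1) (fun _ => gaussianReal 0 1)).symm

theorem measurable_col_add_const_smul :
    Measurable fun x : Fin n × Matrix (Fin m) (Fin n) ℝ × (Fin m → ℝ) =>
      x.2.1.col x.1 + κ • x.2.2 :=
  measurable_from_prod_countable_right fun i =>
    ((measurePreserving_col m i).measurable.comp measurable_fst).add
      (measurable_snd.const_smul κ)

theorem measurePreserving_spikedColumn [NeZero n] :
    MeasurePreserving (fun x : Matrix (Fin m) (Fin n) ℝ × (Fin m → ℝ) × Fin n =>
        x.1.col x.2.2 + κ • x.2.1)
      ((gaussianMatrix m n).prod ((gaussianVec m).prod (uniformFin n)))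
      ((gaussianVec m).map (√(1 + κ ^ 2) • ·)) := by
  have hfixed (i : Fin n) : ((gaussianMatrix m n).prod (gaussianVec m)).map
      (fun x => x.1.col i + κ • x.2) = (gaussianVec m).map (√(1 + κ ^ 2) • ·) :=
    ((measurePreserving_add_const_smul_gaussianVec m κ).comp
      ((measurePreserving_col m i).prod (.id _))).map_eq
  have : IsProbabilityMeasure ((gaussianVec m).map (√(1 + κ ^ 2) • ·)) :=
    Measure.isProbabilityMeasure_map (by fun_prop)
  have hskew := (MeasurePreserving.id (uniformFin n)).skew_product
    (measurable_col_add_const_smul m κ) (.of_forall hfixed)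
  exact measurePreserving_snd.comp (hskew.comp (Measure.measurePreserving_swap.comp
    (measurePreserving_prodAssoc _ _ _).symm))

theorem measurable_add_spike :
    Measurable fun x : Matrix (Fin m) (Fin n) ℝ × ((Fin m → ℝ) × Fin n) =>
      x.1 + Matrix.of fun a b => if b = x.2.2 then κ * x.2.1 a else 0 := by
  refine measurable_pi_lambda _ fun a => measurable_pi_lambda _ fun b => ?_
  simp only [Matrix.add_apply, Matrix.of_apply]
  refine Measurable.add ?_ (Measurable.ite ?_ (by fun_prop) measurable_const)
  · exact (measurable_pi_apply b).comp ((measurable_pi_apply a).comp measurable_fst)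
  · exact measurableSet_eq_fun measurable_const (by fun_prop)

theorem spikedGaussian_opNorm_one_lt_le [NeZero n] (hp : 1 ≤ p) :
    (spikedGaussian m n κ).real {G | opNorm 1 p G < t} ≤
      (gaussianVec m).real {v | √(1 + κ ^ 2) * lpNorm p v < t} := by
  have hmeas : MeasurableSet {v : Fin m → ℝ | lpNorm p v < t} :=
    measurableSet_lt measurable_lpNorm measurable_const
  rw [spikedGaussian, map_measureReal_apply (measurable_add_spike m κ)
    (measurableSet_lt (measurable_opNorm_one hp) measurable_const)]
  calc _ ≤ ((gaussianMatrix m n).prod ((gaussianVec m).prod (uniformFin n))).real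
        ((fun x => x.1.col x.2.2 + κ • x.2.1) ⁻¹' {v | lpNorm p v < t}) := by
        refine measureReal_mono fun x hx => ?_
        rw [Set.mem_preimage, Set.mem_ofPred_eq] at hx ⊢
        refine lt_of_le_of_lt ?_ hx
        convert! lpNorm_col_le_opNorm_one hp _ x.2.2 using 2
        ext a
        simp
    _ = ((gaussianVec m).map (√(1 + κ ^ 2) • ·)).real {v | lpNorm p v < t} :=
        (measurePreserving_spikedColumn m κ).measureReal_preimage hmeas.nullMeasurableSet
    _ = _ := by
        rw [map_measureReal_apply (by fun_prop) hmeas]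
        simp only [Set.preimage_ofPred_eq, lpNorm_smul hp, abs_of_nonneg (Real.sqrt_nonneg _)]

end Columns

theorem ofReal_one_sub_le_of_measureReal_compl_le {Ω : Type*} [MeasurableSpace Ω] {μ : Measure Ω}
    [IsProbabilityMeasure μ] {A : Set Ω} (hA : MeasurableSet A) {ε : ℝ} (h : μ.real Aᶜ ≤ ε) :
    ENNReal.ofReal (1 - ε) ≤ μ A := by
  rw [probReal_compl_eq_one_sub hA] at h
  rw [← ofReal_measureReal (μ := μ)]
  exact ENNReal.ofReal_le_ofReal (by linarith)

instance isProbabilityMeasure_spikedGaussian (m n : ℕ) [NeZero n] (κ : ℝ) :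
    IsProbabilityMeasure (spikedGaussian m n κ) :=
  Measure.isProbabilityMeasure_map (measurable_add_spike m κ).aemeasurable

theorem exists_opNorm_one_tail_le_pow {p : ℝ≥0∞} (hp1 : 1 ≤ p) (hp2 : p ≤ 2) (κ : ℝ) :
    ∃ ρ ∈ Set.Ico (0 : ℝ) 1, ∀ m n : ℕ, m ≠ 0 → n ≠ 0 → ∃ s : ℝ, 0 < s ∧
      (gaussianMatrix m n).real {G | s < opNorm 1 p G} ≤ n * ρ ^ m ∧
      (spikedGaussian m n κ).real {G | opNorm 1 p G < |κ| * s} ≤ ρ ^ m := by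
  have hp0 : p ≠ 0 := (zero_lt_one.trans_le hp1).ne'
  have hσ0 : 0 < √(1 + κ ^ 2) := by positivity
  have hκσ : |κ| < √(1 + κ ^ 2) := Real.lt_sqrt_of_sq_lt (by simp)
  obtain ⟨a, ha1, hκa⟩ : ∃ a, 1 < a ∧ |κ| * a < √(1 + κ ^ 2) := by
    have hlim : Filter.Tendsto (|κ| * ·) (nhdsWithin 1 (Set.Ioi 1)) (nhds |κ|) :=
      ((continuous_const_mul |κ|).tendsto' 1 |κ| (mul_one _)).mono_left nhdsWithin_le_nhds
    exact ((eventually_mem_nhdsWithin (a := (1 : ℝ))).and (hlim.eventually_lt_const hκσ)).exists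
  obtain ⟨ρ₁, ⟨hρ₁0, hρ₁⟩, hupper⟩ := exists_gaussianVec_lt_lpNorm_le_pow hp0 hp2 ha1
  obtain ⟨b, hb⟩ : ∃ b, √(1 + κ ^ 2) * b = |κ| * a := ⟨_, mul_div_cancel₀ _ hσ0.ne'⟩
  have hb0 : 0 ≤ b := nonneg_of_mul_nonneg_right (hb ▸ by positivity) hσ0
  have hb1 : b < 1 := lt_of_mul_lt_mul_left (by rwa [hb, mul_one]) hσ0.le
  obtain ⟨ρ₂, ⟨hρ₂0, hρ₂⟩, hlower⟩ := exists_gaussianVec_lpNorm_lt_le_pow hp0 hp2 hb0 hb1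
  refine ⟨max ρ₁ ρ₂, ⟨le_max_of_le_left hρ₁0, max_lt hρ₁ hρ₂⟩, fun m n hm hn => ?_⟩
  have := NeZero.mk hn
  have hs0 : 0 < a * gaussianLpScale p m :=
    mul_pos (zero_lt_one.trans ha1) (gaussianLpScale_pos hm)
  refine ⟨a * gaussianLpScale p m, hs0, ?_, ?_⟩
  · calc _ ≤ n * (gaussianVec m).real {v | a * gaussianLpScale p m < lpNorm p v} :=
          gaussianMatrix_lt_opNorm_one_le m _ hp1 hs0.le
      _ ≤ n * ρ₁ ^ m := by gcongr; exact hupper m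
      _ ≤ n * max ρ₁ ρ₂ ^ m := by gcongr; exact le_max_left _ _
  · calc _ ≤ (gaussianVec m).real
            {v | √(1 + κ ^ 2) * lpNorm p v < |κ| * (a * gaussianLpScale p m)} :=
          spikedGaussian_opNorm_one_lt_le m κ _ hp1
      _ = (gaussianVec m).real {v | lpNorm p v < b * gaussianLpScale p m} := by
          simp only [← mul_assoc, ← hb]
          simp only [mul_assoc, mul_lt_mul_iff_right₀ hσ0]
      _ ≤ ρ₂ ^ m := hlower m
      _ ≤ max ρ₁ ρ₂ ^ m := by gcongr; exact le_max_right _ _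

theorem one_to_p_separation_general {p : ℝ≥0∞} (hp1 : 1 ≤ p) (hp2 : p ≤ 2) (κ : ℝ) :
    ∃ n₀ : ℕ, ∀ m n : ℕ, n₀ ≤ n → n ≤ m →
      ∃ s : ℝ, 0 < s ∧
        ENNReal.ofReal (1 - 1 / n) ≤ gaussianMatrix m n {G | opNorm 1 p G ≤ s} ∧
        ENNReal.ofReal (1 - 1 / n) ≤ spikedGaussian m n κ {G | |κ| * s ≤ opNorm 1 p G} := by
  obtain ⟨ρ, ⟨hρ0, hρ1⟩, htail⟩ := exists_opNorm_one_tail_le_pow hp1 hp2 κ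
  have hdecay : ∀ᶠ n : ℕ in Filter.atTop, (n : ℝ) ^ 2 * ρ ^ n ≤ 1 :=
    (tendsto_pow_const_mul_const_pow_of_lt_one 2 hρ0 hρ1).eventually_le_const zero_lt_one
  obtain ⟨n₀, hn₀⟩ := Filter.eventually_atTop.1 (hdecay.and (Filter.eventually_ne_atTop 0))
  refine ⟨n₀, fun m n hn hnm => ?_⟩
  obtain ⟨hn_decay, hn0⟩ := hn₀ n hn
  have := NeZero.mk hn0
  have hunion : n * ρ ^ m ≤ 1 / n := by
    rw [le_div_iff₀ (by positivity)]
    calc n * ρ ^ m * n = (n : ℝ) ^ 2 * ρ ^ m := by ring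
      _ ≤ (n : ℝ) ^ 2 * ρ ^ n := by gcongr ?_ * ?_; exact pow_le_pow_of_le_one hρ0 hρ1.le hnm
      _ ≤ 1 := hn_decay
  have hsingle : ρ ^ m ≤ n * ρ ^ m :=
    le_mul_of_one_le_left (by positivity) (mod_cast Nat.one_le_iff_ne_zero.2 hn0)
  obtain ⟨s, hs, hgaussian, hspiked⟩ := htail m n (by lia) hn0
  refine ⟨s, hs, ofReal_one_sub_le_of_measureReal_compl_le ?_ ?_,
    ofReal_one_sub_le_of_measureReal_compl_le ?_ ?_⟩
  · exact measurableSet_le (measurable_opNorm_one hp1) measurable_const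
  · simpa only [Set.compl_ofPred, not_le] using hgaussian.trans hunion
  · exact measurableSet_le measurable_const (measurable_opNorm_one hp1)
  · simpa only [Set.compl_ofPred, not_le] using hspiked.trans (hsingle.trans hunion)

/-- Separation for the 1→p norm, p ∈ [1,2]: for κ ≥ 1 there is n₀ such that for all
n ≥ n₀ there is s > 0 with Pr_{G∼G₁}[‖G‖_{1→p} ≤ s] ≥ 1 − 1/n and
Pr_{G'∼G₂[κ]}[‖G'‖_{1→p} ≥ κ·s] ≥ 1 − 1/n, for n×n matrices. -/
theorem one_to_p_separation (p : ℝ≥0∞) (hp1 : 1 ≤ p) (hp2 : p ≤ 2) (κ : ℝ) (hκ : 1 ≤ κ) :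
    ∃ n₀ : ℕ, ∀ n : ℕ, n₀ ≤ n →
      ∃ s : ℝ, 0 < s ∧
        ENNReal.ofReal (1 - 1 / n) ≤ gaussianMatrix n n {G | opNorm 1 p G ≤ s} ∧
        ENNReal.ofReal (1 - 1 / n) ≤ spikedGaussian n n κ {G | κ * s ≤ opNorm 1 p G} := by
  simpa only [abs_of_pos (zero_lt_one.trans_le hκ)] using
    (one_to_p_separation_general hp1 hp2 κ).imp fun n₀ h n hn => h n n hn le_rfl
end
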